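/- Let E be a bounded subset of ℝⁿ and consider functions f : E → ℝ, g : E → ℝⁿ and h : E → H_n, where H_n is the space of n×n real symmetric matrices. Suppose there exists a constant M ∈ ℝ such that for all x, y ∈ E: (i) ‖h(x) − h(y)‖ ≤ M‖x − y‖, (ii) ‖g(y) − g(x) − h(x)(y − x)‖ ≤ M‖x − y‖², and (iii) |f(y) − f(x) − g(x)ᵀ(y − x) − ½(y − x)ᵀ h(x)(y − x)| ≤ M‖x − y‖³. Then there exists a function F in the class LC^n such that F(x) = f(x), ∇F(x) = g(x) and ∇²F(x) = h(x) for all x ∈ E. -/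

import Mathlib

open scoped RealInnerProductSpace

/-- The class `LCⁿ`: functions `f : ℝⁿ → ℝ` that are twice differentiable with Lipschitz
continuous second derivative and such that, for some constants `C` and `R`, the Hessian
`∇²f(x)` is positive definite with `‖∇²f(x)⁻¹‖ ≤ C` whenever `‖x‖ ≥ R`.  The Hessian at `x`
is the derivative of the gradient, `fderiv ℝ (gradient f) x`. -/
def MemLC {ι : Type*} [Fintype ι] (f : EuclideanSpace ℝ ι → ℝ) : Prop :=
  ContDiff ℝ 2 f ∧
  (∃ L : NNReal, LipschitzWith L fun x => fderiv ℝ (gradient f) x) ∧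
  ∃ C R : ℝ, ∀ x : EuclideanSpace ℝ ι, R ≤ ‖x‖ →
    (∀ v : EuclideanSpace ℝ ι, v ≠ 0 → 0 < ⟪fderiv ℝ (gradient f) x v, v⟫) ∧
    ∃ g : EuclideanSpace ℝ ι →L[ℝ] EuclideanSpace ℝ ι,
      (fderiv ℝ (gradient f) x).comp g = ContinuousLinearMap.id ℝ _ ∧
      g.comp (fderiv ℝ (gradient f) x) = ContinuousLinearMap.id ℝ _ ∧ ‖g‖ ≤ C

/-!
The Hessian must be uniformly positive definite far away, so the jet `(f, g, h)` is first reduced by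
the jet of `½‖x‖²`.  The reduced jet is still a Whitney jet on the bounded set `E`; it extends to
`closure E` by compactness of the closure of its graph (`IsWhitneyJet.exists_closure`), and then by
the zero jet to the complement of a large ball (`IsWhitneyJet.zero_outside`).  Whitney's extension
theorem on the resulting closed set gives a function with Lipschitz second derivative, and adding
`½‖x‖²` back gives `F`, whose Hessian is the identity far away.

The substance is Whitney's theorem for `C^{2,1}` jets on a closed set (`whitney_closed`).  A maximal
separated set of points off `E` gives a cover by balls of radius comparable to the distance to `E`
and of bounded overlap (`exists_whitney_cover`).  Off `E` the extension is an average of Taylor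
polynomials at nearby points of `E` with smooth weights at the scale of this cover.  Nearby Taylor
polynomials differ by the order of the Taylor remainder (`IsWhitneyJet.taylor_sub`), and the product
and quotient rules for the scale-invariant bounds `JetBound` carry this over to the extension
(`exists_extension_off`): it agrees with each Taylor polynomial to third order, with a bounded third
derivative off `E`.
-/

/-! ### Scale-invariant derivative bounds -/

section Bounds

variable {V : Type*} [NormedAddCommGroup V] [InnerProductSpace ℝ V]

/-- `u` is `C³` near `x`, and its derivatives of order `k ≤ 3` at `x` are at most `C * δ⁻ᵏ`:
the bound obeyed by a function of size `C` varying at length scale `δ`.  The powers of `δ` are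
cleared from denominators, so nothing depends on division by zero. -/
def JetBound (u : V → ℝ) (x : V) (δ C : ℝ) : Prop :=
  ContDiffAt ℝ 3 u x ∧ ∀ k ≤ 3, ‖iteratedFDeriv ℝ k u x‖ * δ ^ k ≤ C

lemma JetBound.congr {u v : V → ℝ} {x : V} {δ C : ℝ} (hu : JetBound u x δ C)
    (h : v =ᶠ[nhds x] u) : JetBound v x δ C :=
  ⟨hu.1.congr_of_eventuallyEq h, fun k hk => by rw [h.iteratedFDeriv ℝ k |>.eq_of_nhds]; exact hu.2 k hk⟩

lemma JetBound.mono {u : V → ℝ} {x : V} {δ C C' : ℝ} (hu : JetBound u x δ C) (h : C ≤ C') :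
    JetBound u x δ C' :=
  ⟨hu.1, fun k hk => (hu.2 k hk).trans h⟩

lemma JetBound.nonneg {u : V → ℝ} {x : V} {δ C : ℝ} (hu : JetBound u x δ C) : 0 ≤ C := by
  have := hu.2 0 (by norm_num)
  simp only [pow_zero, mul_one] at this
  exact (norm_nonneg _).trans this

lemma exists_open_contDiffOn {u : V → ℝ} {x : V} (h : ContDiffAt ℝ 3 u x) :
    ∃ s : Set V, IsOpen s ∧ x ∈ s ∧ ContDiffOn ℝ 3 u s := by
  obtain ⟨s, hs, ho, hx⟩ := eventually_nhds_iff.1 (h.eventually (by decide))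
  exact ⟨s, ho, hx, fun y hy => (hs y hy).contDiffWithinAt⟩

/-- The constant `8 = 2 ^ 3` is the sum of the binomial coefficients in the Leibniz rule. -/
lemma JetBound.mul {u v : V → ℝ} {x : V} {δ C D : ℝ} (hδ : 0 ≤ δ) (hu : JetBound u x δ C)
    (hv : JetBound v x δ D) : JetBound (fun y => u y * v y) x δ (8 * C * D) := by
  refine ⟨hu.1.mul hv.1, fun k hk => ?_⟩
  obtain ⟨s, hs, hxs, hus⟩ := exists_open_contDiffOn hu.1
  obtain ⟨t, ht, hxt, hvt⟩ := exists_open_contDiffOn hv.1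
  have ho := hs.inter ht
  have hx : x ∈ s ∩ t := ⟨hxs, hxt⟩
  have key := norm_iteratedFDerivWithin_mul_le (hus.mono Set.inter_subset_left)
    (hvt.mono Set.inter_subset_right) ho.uniqueDiffOn hx (n := k) (by exact_mod_cast hk)
  simp only [iteratedFDerivWithin_of_isOpen _ ho hx] at key
  have hC := hu.nonneg
  have hD := hv.nonneg
  calc _ ≤ (∑ i ∈ Finset.range (k + 1), (k.choose i : ℝ) * ‖iteratedFDeriv ℝ i u x‖ *
        ‖iteratedFDeriv ℝ (k - i) v x‖) * δ ^ k := by gcongr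
    _ = ∑ i ∈ Finset.range (k + 1), (k.choose i : ℝ) * ((‖iteratedFDeriv ℝ i u x‖ * δ ^ i) *
        (‖iteratedFDeriv ℝ (k - i) v x‖ * δ ^ (k - i))) := by
      rw [Finset.sum_mul]
      refine Finset.sum_congr rfl fun i hi => ?_
      have : δ ^ k = δ ^ i * δ ^ (k - i) := by
        rw [← pow_add]; congr 1; have := Finset.mem_range.1 hi; omega
      rw [this]; ring
    _ ≤ ∑ i ∈ Finset.range (k + 1), (k.choose i : ℝ) * (C * D) := by
      refine Finset.sum_le_sum fun i hi => ?_
      have := Finset.mem_range.1 hi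
      have h1 := hu.2 i (by omega)
      have h2 := hv.2 (k - i) (by omega)
      gcongr
    _ = (2 : ℝ) ^ k * (C * D) := by
      rw [← Finset.sum_mul]
      congr 1
      exact_mod_cast Nat.sum_range_choose k
    _ ≤ 2 ^ 3 * (C * D) := by gcongr; norm_num
    _ = _ := by ring

lemma JetBound.sum {ι : Type*} {I : Finset ι} {u : ι → V → ℝ} {x : V} {δ C : ℝ} {N : ℕ}
    (hδ : 0 ≤ δ) (hC : 0 ≤ C) (hN : I.card ≤ N) (hu : ∀ i ∈ I, JetBound (u i) x δ C) :
    JetBound (fun y => ∑ i ∈ I, u i y) x δ (N * C) := by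
  refine ⟨ContDiffAt.sum fun i hi => (hu i hi).1, fun k hk => ?_⟩
  rw [iteratedFDeriv_fun_sum_apply fun i hi => (hu i hi).1.of_le (by exact_mod_cast hk)]
  calc _ ≤ (∑ i ∈ I, ‖iteratedFDeriv ℝ k (u i) x‖) * δ ^ k := by
        gcongr; exact norm_sum_le _ _
    _ = ∑ i ∈ I, ‖iteratedFDeriv ℝ k (u i) x‖ * δ ^ k := Finset.sum_mul _ _ _
    _ ≤ ∑ i ∈ I, C := Finset.sum_le_sum fun i hi => (hu i hi).2 k hk
    _ = I.card * C := by simp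
    _ ≤ N * C := by gcongr

/-- The constant `36 = 3! * 3!` is the factorial in the Faà di Bruno bound times a bound for the
derivatives of `t ↦ t⁻¹` at points `t ≥ 1`. -/
lemma JetBound.inv {u : V → ℝ} {x : V} {δ C : ℝ} (hδ : 0 < δ) (hu : JetBound u x δ C)
    (h1 : 1 ≤ u x) (hC : 1 ≤ C) : JetBound (fun y => (u y)⁻¹) x δ (36 * C ^ 3) := by
  have hx0 : u x ≠ 0 := by positivity
  refine ⟨hu.1.inv hx0, fun k hk => ?_⟩
  obtain ⟨s, hs, hxs, hus⟩ := exists_open_contDiffOn hu.1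
  have hto : IsOpen ({0}ᶜ : Set ℝ) := isOpen_compl_singleton
  have ho : IsOpen (s ∩ u ⁻¹' {0}ᶜ) := hus.continuousOn.isOpen_inter_preimage hs hto
  have hx : x ∈ s ∩ u ⁻¹' {0}ᶜ := ⟨hxs, hx0⟩
  have key := norm_iteratedFDerivWithin_comp_le (g := fun t : ℝ => t⁻¹) (f := u) (n := k) (N := 3)
    (s := s ∩ u ⁻¹' {0}ᶜ) (t := {0}ᶜ) (C := 6) (D := C / δ)
    (fun y hy => (contDiffAt_inv ℝ hy).contDiffWithinAt)
    (hus.mono Set.inter_subset_left) (by exact_mod_cast hk) hto.uniqueDiffOn ho.uniqueDiffOn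
    (fun y hy => hy.2) hx ?_ ?_
  · rw [iteratedFDerivWithin_of_isOpen _ ho hx] at key
    have hf : (k.factorial : ℝ) ≤ 6 := by
      exact_mod_cast (Nat.factorial_le hk : k.factorial ≤ Nat.factorial 3)
    have hCk : C ^ k ≤ C ^ 3 := pow_le_pow_right₀ hC hk
    calc _ ≤ (k.factorial * 6 * (C / δ) ^ k) * δ ^ k := by
          gcongr; exact key
      _ = k.factorial * 6 * C ^ k := by
        rw [mul_assoc, ← mul_pow, div_mul_cancel₀ _ hδ.ne']
      _ ≤ 6 * 6 * C ^ 3 := by gcongr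
      _ = _ := by ring
  · intro i hi
    rw [iteratedFDerivWithin_of_isOpen _ hto hx0, norm_iteratedFDeriv_eq_norm_iteratedDeriv,
      iteratedDeriv_eq_iterate, iter_deriv_inv]
    have hf : (i.factorial : ℝ) ≤ 6 := by
      exact_mod_cast (Nat.factorial_le (hi.trans hk) : i.factorial ≤ Nat.factorial 3)
    have hz : (u x) ^ (-1 - (i : ℤ)) ≤ 1 := zpow_le_one_of_nonpos₀ h1 (by omega)
    have hz0 : 0 ≤ (u x) ^ (-1 - (i : ℤ)) := by positivity
    simp only [norm_mul, norm_pow, norm_neg, norm_one, one_pow, one_mul, Real.norm_natCast, Real.norm_of_nonneg hz0]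
    nlinarith
  · intro i hi hik
    rw [iteratedFDerivWithin_of_isOpen _ ho hx, div_pow, le_div_iff₀ (by positivity)]
    exact (hu.2 i (hik.trans hk)).trans (le_self_pow₀ hC (by omega))

end Bounds

/-! ### Whitney covers -/

section Cover
variable {V : Type*} [NormedAddCommGroup V] [InnerProductSpace ℝ V] [FiniteDimensional ℝ V]

/-- Finite dimensionality in the form used here: the number of `c * δ`-separated points in a ball
of radius `δ` is bounded independently of the ball.  After rescaling to the unit ball, each member
of a finite cover by balls of radius `c / 2` holds at most one of the points. -/
lemma exists_card_le_of_separated (V : Type*) [NormedAddCommGroup V] [InnerProductSpace ℝ V]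
    [FiniteDimensional ℝ V] {c : ℝ} (hc : 0 < c) :
    ∃ N : ℕ, ∀ (x : V) (δ : ℝ), 0 < δ → ∀ A : Set V, A ⊆ Metric.closedBall x δ →
      (A.Pairwise fun z w => c * δ ≤ dist z w) → ∃ I : Finset V, (I : Set V) = A ∧ I.card ≤ N := by
  have : ProperSpace V := FiniteDimensional.proper ℝ V
  obtain ⟨t, -, htf, hcov⟩ := (isCompact_closedBall (0 : V) 1).finite_cover_balls (half_pos hc)
  -- `N` is the number of balls of radius `c / 2` that cover the unit ball.
  refine ⟨htf.toFinset.card, fun x δ hδ A hA hsep => ?_⟩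
  have hex : ∀ z ∈ A, ∃ p ∈ t, dist (δ⁻¹ • (z - x)) p < c / 2 := by
    intro z hz
    have : δ⁻¹ • (z - x) ∈ Metric.closedBall (0 : V) 1 := by
      rw [mem_closedBall_zero_iff, norm_smul, norm_inv, Real.norm_of_nonneg hδ.le]
      have := hA hz
      rw [mem_closedBall_iff_norm] at this
      rw [inv_mul_le_iff₀ hδ]; linarith
    simpa using hcov this
  choose! p hp hpd using hex
  have hinj : Set.InjOn p A := by
    intro z hz w hw hzw
    by_contra hne
    have h1 := hsep hz hw hne
    have h2 := hpd z hz
    have h3 := hpd w hw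
    rw [← hzw] at h3
    have h4 : dist (δ⁻¹ • (z - x)) (δ⁻¹ • (w - x)) < c := by
      have := dist_triangle_right (δ⁻¹ • (z - x)) (δ⁻¹ • (w - x)) (p z)
      linarith
    rw [dist_smul₀, dist_sub_right, norm_inv, Real.norm_of_nonneg hδ.le, inv_mul_lt_iff₀ hδ] at h4
    linarith
  have hAf : A.Finite := Set.Finite.of_injOn (f := p) hp hinj htf
  refine ⟨hAf.toFinset, by simp, ?_⟩
  exact Finset.card_le_card_of_injOn p (fun z hz => by simpa using hp z (by simpa using hz))
    (by simpa using hinj)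

/-- A Whitney cover of the complement of a closed set `E`, given by its set `T` of centres.  Every
point off `E` is within one eighth of the distance to `E` from some centre, and near each point only
boundedly many centres have comparable distance to `E`.  `T` is a maximal set whose points are
separated by one sixteenth of their distance to `E`. -/
lemma exists_whitney_cover (E : Set V) (hE : IsClosed E) (hne : E.Nonempty) :
    ∃ (T : Set V) (N : ℕ), T ⊆ Eᶜ ∧
      (∀ x ∉ E, ∃ z ∈ T, dist x z ≤ Metric.infDist z E / 8) ∧
      ∀ x ∉ E, ∃ I : Finset V, I.card ≤ N ∧ ∀ z, z ∈ I ↔ z ∈ T ∧ dist z x ≤ Metric.infDist x E ∧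
        Metric.infDist x E / 2 ≤ Metric.infDist z E ∧
        Metric.infDist z E ≤ 2 * Metric.infDist x E := by
  -- Centres counted near `x` have distance at least `infDist x E / 2` to `E`, and are separated by
  -- a sixteenth of that.
  obtain ⟨N, hN⟩ := exists_card_le_of_separated V (c := 1 / 32) (by norm_num)
  obtain ⟨T, hT⟩ : ∃ T, Maximal (fun T : Set V => T ⊆ Eᶜ ∧
      T.Pairwise fun z w => Metric.infDist z E / 16 ≤ dist z w) T := by
    refine zorn_subset {T : Set V | T ⊆ Eᶜ ∧
      T.Pairwise fun z w => Metric.infDist z E / 16 ≤ dist z w} fun c hc hch => ?_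
    refine ⟨⋃₀ c, ⟨Set.sUnion_subset fun s hs => (hc hs).1, ?_⟩, fun s hs => Set.subset_sUnion_of_mem hs⟩
    rw [Set.pairwise_sUnion hch.directedOn]
    exact fun s hs => (hc hs).2
  refine ⟨T, N, hT.prop.1, fun x hx => ?_, fun x hx => ?_⟩
  · have hpos : 0 < Metric.infDist x E := (hE.notMem_iff_infDist_pos hne).1 hx
    by_contra! hcon
    have hxT : x ∉ T := fun h => by
      have := hcon x h
      rw [dist_self] at this; linarith
    have : insert x T ⊆ T := hT.le_of_ge ⟨Set.insert_subset hx hT.prop.1, ?_⟩ (Set.subset_insert _ _)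
    · exact hxT (this (Set.mem_insert _ _))
    rw [Set.pairwise_insert]
    refine ⟨hT.prop.2, fun z hz _ => ?_⟩
    -- If `x` is uncovered, then it may be added to `T`, since `z ↦ infDist z E` is 1-Lipschitz.
    have h1 := hcon z hz
    have h2 := Metric.infDist_le_infDist_add_dist (s := E) (x := x) (y := z)
    have h3 := Metric.infDist_nonneg (s := E) (x := z)
    rw [dist_comm z x]
    constructor <;> linarith
  · have hpos : 0 < Metric.infDist x E := (hE.notMem_iff_infDist_pos hne).1 hx
    obtain ⟨I, hI, hc⟩ := hN x (Metric.infDist x E) hpos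
      {z | z ∈ T ∧ dist z x ≤ Metric.infDist x E ∧
        Metric.infDist x E / 2 ≤ Metric.infDist z E ∧
        Metric.infDist z E ≤ 2 * Metric.infDist x E} (fun z hz => hz.2.1) (by
          intro z hz w hw hzw
          have := hT.prop.2 hz.1 hw.1 hzw
          have := hz.2.2.1
          simp only at *
          linarith)
    refine ⟨I, hc, fun z => ?_⟩
    rw [← Finset.mem_coe, hI]; rfl

end Cover

/-! ### Gradients, Hessians and second-order Taylor polynomials -/

section
variable {V : Type*} [NormedAddCommGroup V] [InnerProductSpace ℝ V] [CompleteSpace V]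

/-- The Riesz isomorphism from the dual of `V` to `V`.  Over `ℝ` the conjugate-linear equivalence
`InnerProductSpace.toDual` is linear; the linear structure is needed to commute it with iterated
derivatives. -/
noncomputable def dualEquiv (V : Type*) [NormedAddCommGroup V] [InnerProductSpace ℝ V]
    [CompleteSpace V] : StrongDual ℝ V ≃ₗᵢ[ℝ] V where
  toFun := (InnerProductSpace.toDual ℝ V).symm
  invFun := InnerProductSpace.toDual ℝ V
  left_inv x := by simp
  right_inv x := by simp
  map_add' x y := by simp
  map_smul' c x := by simp
  norm_map' x := LinearIsometryEquiv.norm_map _ x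

lemma gradient_eq_comp (u : V → ℝ) : gradient u = dualEquiv V ∘ fderiv ℝ u := rfl

lemma norm_iteratedFDeriv_gradient (u : V → ℝ) (x : V) (k : ℕ) :
    ‖iteratedFDeriv ℝ k (gradient u) x‖ = ‖iteratedFDeriv ℝ (k + 1) u x‖ := by
  rw [gradient_eq_comp, (dualEquiv V).norm_iteratedFDeriv_comp_left, norm_iteratedFDeriv_fderiv]

lemma norm_iteratedFDeriv_one_eq (u : V → ℝ) (x : V) :
    ‖iteratedFDeriv ℝ 1 u x‖ = ‖gradient u x‖ := by
  rw [← norm_iteratedFDeriv_gradient, norm_iteratedFDeriv_zero]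

lemma norm_iteratedFDeriv_two_eq (u : V → ℝ) (x : V) :
    ‖iteratedFDeriv ℝ 2 u x‖ = ‖fderiv ℝ (gradient u) x‖ := by
  rw [← norm_iteratedFDeriv_gradient, ← norm_iteratedFDeriv_fderiv, norm_iteratedFDeriv_zero]

lemma norm_iteratedFDeriv_three_eq (u : V → ℝ) (x : V) :
    ‖iteratedFDeriv ℝ 3 u x‖ = ‖fderiv ℝ (fderiv ℝ (gradient u)) x‖ := by
  rw [← norm_iteratedFDeriv_gradient, ← norm_iteratedFDeriv_fderiv, ← norm_iteratedFDeriv_fderiv,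
    norm_iteratedFDeriv_zero]

/-- The second-order Taylor polynomial, centred at `a`, of the jet `(f, g, h)`. -/
noncomputable def taylor (f : V → ℝ) (g : V → V) (h : V → V →L[ℝ] V) (a x : V) : ℝ :=
  f a + ⟪g a, x - a⟫ + (1 / 2) * ⟪x - a, h a (x - a)⟫

/-- `(f, g, h)` is a Whitney jet of class `C^{2,1}` on `E` with constant `M`: the values, gradients
and Hessians at any two points of `E` agree up to the Taylor remainders of a function whose second
derivative is Lipschitz. -/
structure IsWhitneyJet (E : Set V) (M : ℝ) (f : V → ℝ) (g : V → V) (h : V → V →L[ℝ] V) : Prop where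
  nonneg : 0 ≤ M
  symm : ∀ x ∈ E, ∀ u v : V, ⟪h x u, v⟫ = ⟪u, h x v⟫
  hess : ∀ x ∈ E, ∀ y ∈ E, ‖h x - h y‖ ≤ M * ‖x - y‖
  grad : ∀ x ∈ E, ∀ y ∈ E, ‖g y - g x - h x (y - x)‖ ≤ M * ‖x - y‖ ^ 2
  val : ∀ x ∈ E, ∀ y ∈ E,
      |f y - f x - ⟪g x, y - x⟫ - (1 / 2) * ⟪y - x, h x (y - x)⟫| ≤ M * ‖x - y‖ ^ 3

variable {E : Set V} {M : ℝ} {f : V → ℝ} {g : V → V} {h : V → V →L[ℝ] V}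

omit [CompleteSpace V] in
lemma contDiff_taylor (f : V → ℝ) (g : V → V) (h : V → V →L[ℝ] V) (a : V) (n : WithTop ℕ∞) :
    ContDiff ℝ n (taylor f g h a) := by
  have h0 : ContDiff ℝ n (fun x : V => x - a) := contDiff_id.sub contDiff_const
  exact (contDiff_const.add (contDiff_const.inner ℝ h0)).add
    (contDiff_const.mul (h0.inner ℝ ((h a).contDiff.comp h0)))

lemma hasGradientAt_taylor (a x : V) (hs : ∀ u v : V, ⟪h a u, v⟫ = ⟪u, h a v⟫) :
    HasGradientAt (taylor f g h a) (g a + h a (x - a)) x := by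
  rw [hasGradientAt_iff_hasFDerivAt]
  have h0 : HasFDerivAt (fun x : V => x - a) (ContinuousLinearMap.id ℝ V) x :=
    (hasFDerivAt_id x).sub_const a
  have h1 := ((hasFDerivAt_const (g a) x).inner ℝ h0)
  have h2 := (h0.inner ℝ ((h a).hasFDerivAt.comp x h0)).const_mul (1 / 2)
  refine ((h1.const_add (f a)).add h2).congr_fderiv ?_
  ext w
  have e1 := hs (x - a) w
  have e2 := real_inner_comm w (h a (x - a))
  simp only [ContinuousLinearMap.comp_id, Function.comp_apply, one_div, add_apply,
    ContinuousLinearMap.comp_apply, ContinuousLinearMap.prod_apply,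
    zero_apply, ContinuousLinearMap.id_apply, fderivInnerCLM_apply,
    smul_apply, inner_zero_left, add_zero, smul_eq_mul, InnerProductSpace.toDual_apply_apply,
    inner_add_left]
  linarith

lemma gradient_taylor (a : V) (hs : ∀ u v : V, ⟪h a u, v⟫ = ⟪u, h a v⟫) :
    gradient (taylor f g h a) = fun x => g a + h a (x - a) :=
  funext fun x => (hasGradientAt_taylor a x hs).gradient

lemma fderiv_gradient_taylor (a : V) (hs : ∀ u v : V, ⟪h a u, v⟫ = ⟪u, h a v⟫) :
    fderiv ℝ (gradient (taylor f g h a)) = fun _ => h a := by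
  rw [gradient_taylor a hs]
  ext1 x
  have h0 : HasFDerivAt (fun x : V => x - a) (ContinuousLinearMap.id ℝ V) x :=
    (hasFDerivAt_id x).sub_const a
  exact (((h a).hasFDerivAt.comp x h0).const_add (g a)).fderiv

lemma gradient_sub {u v : V → ℝ} {x : V} (hu : DifferentiableAt ℝ u x)
    (hv : DifferentiableAt ℝ v x) :
    gradient (fun y => u y - v y) x = gradient u x - gradient v x := by
  simp [gradient, fderiv_fun_sub hu hv]

lemma differentiable_gradient_taylor (a : V) (hs : ∀ u v : V, ⟪h a u, v⟫ = ⟪u, h a v⟫) :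
    Differentiable ℝ (gradient (taylor f g h a)) := by
  rw [gradient_taylor a hs]
  fun_prop

/-- Whitney's compatibility conditions, restated: the Taylor polynomials at two points of `E` within
distance `s` of `x` have derivatives at `x` that agree up to the order of the Taylor remainder.  The constant `13` is
`8 + 4 + 1`, from the value estimate at `k = 0`. -/
lemma IsWhitneyJet.taylor_sub (hj : IsWhitneyJet E M f g h) {a b x : V} (ha : a ∈ E) (hb : b ∈ E)
    {s : ℝ} (hsa : ‖x - a‖ ≤ s) (hsb : ‖x - b‖ ≤ s) (k : ℕ) (hk : k ≤ 3) :
    ‖iteratedFDeriv ℝ k (fun y => taylor f g h a y - taylor f g h b y) x‖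
      ≤ 13 * M * s ^ (3 - k) := by
  have hM := hj.nonneg
  have hs0 : 0 ≤ s := (norm_nonneg _).trans hsa
  have hab : ‖a - b‖ ≤ 2 * s := by
    have := norm_sub_le (x - b) (x - a)
    rw [sub_sub_sub_cancel_left] at this
    linarith
  have hd := fun c : V => (contDiff_taylor f g h c 2).differentiable (by norm_num)
  have hgr : gradient (fun y => taylor f g h a y - taylor f g h b y) =
      fun y => gradient (taylor f g h a) y - gradient (taylor f g h b) y :=
    funext fun y => gradient_sub (hd a y) (hd b y)
  have hhe : fderiv ℝ (gradient (fun y => taylor f g h a y - taylor f g h b y)) =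
      fun y => h a - h b := by
    ext1 y
    rw [hgr, fderiv_fun_sub (differentiable_gradient_taylor a (hj.symm a ha) y)
      (differentiable_gradient_taylor b (hj.symm b hb) y), fderiv_gradient_taylor a (hj.symm a ha),
      fderiv_gradient_taylor b (hj.symm b hb)]
  have b0 : |f b - f a - ⟪g a, b - a⟫ - (1 / 2) * ⟪b - a, h a (b - a)⟫| ≤ 8 * M * s ^ 3 := by
    calc _ ≤ M * ‖a - b‖ ^ 3 := hj.val a ha b hb
      _ ≤ M * (2 * s) ^ 3 := by gcongr
      _ = _ := by ring
  have b1 : ‖g b - g a - h a (b - a)‖ ≤ 4 * M * s ^ 2 := by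
    calc _ ≤ M * ‖a - b‖ ^ 2 := hj.grad a ha b hb
      _ ≤ M * (2 * s) ^ 2 := by gcongr
      _ = _ := by ring
  have b2 : ‖h a - h b‖ ≤ 2 * M * s := by
    calc _ ≤ M * ‖a - b‖ := hj.hess a ha b hb
      _ ≤ M * (2 * s) := by gcongr
      _ = _ := by ring
  have b3 : ‖(h a - h b) (x - b)‖ ≤ 2 * M * s ^ 2 := by
    calc _ ≤ ‖h a - h b‖ * ‖x - b‖ := ContinuousLinearMap.le_opNorm _ _
      _ ≤ 2 * M * s * s := by gcongr
      _ = _ := by ring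
  have hx : x - a = (x - b) + (b - a) := by abel
  interval_cases k
  · rw [norm_iteratedFDeriv_zero]
    have e : taylor f g h a x - taylor f g h b x =
        -(f b - f a - ⟪g a, b - a⟫ - (1 / 2) * ⟪b - a, h a (b - a)⟫)
        - ⟪g b - g a - h a (b - a), x - b⟫ + (1 / 2) * ⟪x - b, (h a - h b) (x - b)⟫ := by
      have e1 := hj.symm a ha (b - a) (x - b)
      have e2 := real_inner_comm (x - b) (h a (b - a))
      unfold taylor
      rw [hx]
      generalize x - b = u at *
      generalize b - a = w at *
      simp only [map_add, inner_add_left, inner_add_right, inner_sub_left, inner_sub_right,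
        sub_apply]
      linarith
    have c1 : |⟪g b - g a - h a (b - a), x - b⟫| ≤ 4 * M * s ^ 2 * s :=
      (abs_real_inner_le_norm _ _).trans (by gcongr)
    have c2 : |⟪x - b, (h a - h b) (x - b)⟫| ≤ s * (2 * M * s ^ 2) :=
      (abs_real_inner_le_norm _ _).trans (by gcongr)
    rw [e, Real.norm_eq_abs, abs_le]
    rw [abs_le] at b0 c1 c2
    constructor <;> nlinarith
  · rw [norm_iteratedFDeriv_one_eq, hgr]
    simp only [gradient_taylor a (hj.symm a ha), gradient_taylor b (hj.symm b hb)]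
    have e : g a + h a (x - a) - (g b + h b (x - b)) =
        -(g b - g a - h a (b - a)) + (h a - h b) (x - b) := by
      rw [hx]; simp only [map_add, sub_apply]; abel
    rw [e]
    refine (norm_add_le _ _).trans ?_
    rw [norm_neg]
    have : 0 ≤ M * s ^ 2 := by positivity
    change _ ≤ 13 * M * s ^ 2
    linarith
  · rw [norm_iteratedFDeriv_two_eq, hhe]
    have : 0 ≤ M * s := by positivity
    change _ ≤ 13 * M * s ^ 1
    rw [pow_one]
    linarith
  · rw [norm_iteratedFDeriv_three_eq, hhe]
    rw [show fderiv ℝ (fun _ : V => h a - h b) x = 0 from (hasFDerivAt_const _ _).fderiv]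
    exact (norm_zero (E := V →L[ℝ] V →L[ℝ] V)).le.trans (by positivity)

lemma contDiffAt_gradient {u : V → ℝ} {x : V} (hu : ContDiffAt ℝ 3 u x) :
    ContDiffAt ℝ 2 (gradient u) x :=
  (dualEquiv V).contDiff.contDiffAt.comp x (hu.fderiv_right (m := 2) (by norm_num))

lemma gradient_sub_eventuallyEq {u v : V → ℝ} {x : V} (hu : ContDiffAt ℝ 3 u x)
    (hv : ContDiffAt ℝ 3 v x) : gradient (fun y => u y - v y) =ᶠ[nhds x]
      fun y => gradient u y - gradient v y := by
  filter_upwards [hu.eventually (by decide), hv.eventually (by decide)] with y h1 h2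
  exact gradient_sub (h1.differentiableAt (by norm_num)) (h2.differentiableAt (by norm_num))

lemma fderiv_gradient_sub_taylor {u : V → ℝ} {x : V} (hu : ContDiffAt ℝ 3 u x) (a : V)
    (hs : ∀ u v : V, ⟪h a u, v⟫ = ⟪u, h a v⟫) :
    fderiv ℝ (gradient fun y => u y - taylor f g h a y) =ᶠ[nhds x]
      fun y => fderiv ℝ (gradient u) y - h a := by
  have h1 := (gradient_sub_eventuallyEq hu (contDiff_taylor f g h a 3).contDiffAt).fderiv (𝕜 := ℝ)
  filter_upwards [h1, hu.eventually (by decide)] with y hy hy2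
  rw [hy, fderiv_fun_sub ((contDiffAt_gradient hy2).differentiableAt (by norm_num))
    (differentiable_gradient_taylor a hs y), fderiv_gradient_taylor a hs]
end

/-! ### The extension off a closed set -/

section Ext
variable {V : Type*} [NormedAddCommGroup V] [InnerProductSpace ℝ V] [CompleteSpace V]
  [FiniteDimensional ℝ V]

/-- A plateau function of radius `1 / 8` supported in radius `1 / 4`, matching the covering radius
of `exists_whitney_cover`. -/
lemma exists_bump (V : Type*) [NormedAddCommGroup V] [InnerProductSpace ℝ V]
    [FiniteDimensional ℝ V] :
    ∃ (φ : V → ℝ) (B : ℝ), ContDiff ℝ 3 φ ∧ 1 ≤ B ∧ (∀ x, 0 ≤ φ x) ∧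
      (∀ x, ‖x‖ ≤ 1 / 8 → φ x = 1) ∧ (∀ x, φ x ≠ 0 → ‖x‖ < 1 / 4) ∧
      ∀ k ≤ 3, ∀ x, ‖iteratedFDeriv ℝ k φ x‖ ≤ B := by
  let φ : ContDiffBump (0 : V) := ⟨1 / 8, 1 / 4, by norm_num, by norm_num⟩
  have hφ : ContDiff ℝ 3 φ := φ.contDiff
  have hb : ∀ k : ℕ, ∃ C, k ≤ 3 → ∀ x, ‖iteratedFDeriv ℝ k φ x‖ ≤ C := by
    intro k
    by_cases hk : k ≤ 3
    · obtain ⟨C, hC⟩ := (φ.hasCompactSupport.iteratedFDeriv (𝕜 := ℝ) k).exists_bound_of_continuous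
        (hφ.continuous_iteratedFDeriv (by exact_mod_cast hk))
      exact ⟨C, fun _ => hC⟩
    · exact ⟨0, fun h => absurd h hk⟩
  choose C hC using hb
  refine ⟨φ, 1 + ∑ k ∈ Finset.range 4, |C k|, hφ, ?_, fun x => φ.nonneg, fun x hx => ?_,
    fun x hx => ?_, fun k hk x => ?_⟩
  · have : 0 ≤ ∑ k ∈ Finset.range 4, |C k| := Finset.sum_nonneg fun _ _ => abs_nonneg _
    linarith
  · exact φ.one_of_mem_closedBall (by rwa [mem_closedBall_zero_iff])
  · have : x ∈ Function.support φ := hx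
    rwa [φ.support_eq, mem_ball_zero_iff] at this
  · have h1 := Finset.single_le_sum (f := fun k => |C k|) (fun i _ => abs_nonneg _)
      (Finset.mem_range.2 (by omega : k < 4))
    have h2 := hC k hk x
    have h3 := le_abs_self (C k)
    linarith

omit [CompleteSpace V] [FiniteDimensional ℝ V] in
/-- A bump rescaled to radius `r ≥ δ / 2` varies at length scale `δ`. -/
lemma jetBound_bump {φ : V → ℝ} {B : ℝ} (hφ : ContDiff ℝ 3 φ)
    (hB : ∀ k ≤ 3, ∀ x, ‖iteratedFDeriv ℝ k φ x‖ ≤ B) {r δ : ℝ} (hr : 0 < r) (hδ : 0 ≤ δ)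
    (h : δ / 2 ≤ r) (z x : V) : JetBound (fun y => φ (r⁻¹ • (y - z))) x δ (8 * B) := by
  refine ⟨(hφ.comp (contDiff_const.smul (contDiff_id.sub contDiff_const))).contDiffAt, fun k hk => ?_⟩
  have e : iteratedFDeriv ℝ k (fun y => φ (r⁻¹ • (y - z))) x =
      (r⁻¹) ^ k • iteratedFDeriv ℝ k φ (r⁻¹ • (x - z)) := by
    rw [iteratedFDeriv_comp_sub (f := fun y => φ (r⁻¹ • y)) k z x,
      iteratedFDeriv_comp_const_smul _ (hφ.of_le (by exact_mod_cast hk))]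
  have hB0 : 0 ≤ B := (norm_nonneg _).trans (hB 0 (by norm_num) x)
  have h2 : r⁻¹ * δ ≤ 2 := by
    rw [inv_mul_le_iff₀ hr]; linarith
  rw [e, norm_smul, norm_pow, norm_inv, Real.norm_of_nonneg hr.le]
  calc _ = (r⁻¹ * δ) ^ k * ‖iteratedFDeriv ℝ k φ (r⁻¹ • (x - z))‖ := by rw [mul_pow]; ring
    _ ≤ 2 ^ k * B := by
      have := hB k hk (r⁻¹ • (x - z))
      gcongr
    _ ≤ 2 ^ 3 * B := by gcongr; norm_num
    _ = _ := by norm_num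

/-- Whitney's extension.  Off `E` it is the average, weighted by bumps on a Whitney cover, of the
Taylor polynomials at nearest points `p z` to the centres `z`.  Near `x` its difference from the
Taylor polynomial at `p x` is an average of boundedly many differences controlled by
`IsWhitneyJet.taylor_sub`. -/
lemma exists_extension_off {E : Set V} {M : ℝ} {f : V → ℝ} {g : V → V} {h : V → V →L[ℝ] V}
    (hE : IsClosed E) (hne : E.Nonempty) (hj : IsWhitneyJet E M f g h) :
    ∃ (F : V → ℝ) (C : ℝ), 0 ≤ C ∧ (∀ a ∈ E, F a = f a) ∧
      ∀ x ∉ E, ∃ a ∈ E, Metric.infDist x E = dist x a ∧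
        JetBound (fun y => F y - taylor f g h a y) x (Metric.infDist x E)
          (C * Metric.infDist x E ^ 3) := by
  classical
  have : ProperSpace V := FiniteDimensional.proper ℝ V
  have hM := hj.nonneg
  obtain ⟨T, N, hTE, hcov, hfin⟩ := exists_whitney_cover E hE hne
  obtain ⟨φ, B, hφ, hB1, hφ0, hφ1, hφs, hφB⟩ := exists_bump V
  choose p hpE hpd using hE.exists_infDist_eq_dist hne
  set d : V → ℝ := fun x => Metric.infDist x E with hd
  have hdpos : ∀ x ∉ E, 0 < d x := fun x hx => (hE.notMem_iff_infDist_pos hne).1 hx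
  have hdlip : ∀ x y, d x ≤ d y + dist x y := fun x y => Metric.infDist_le_infDist_add_dist
  let ψ : V → V → ℝ := fun z y => if z ∈ T then φ ((d z)⁻¹ • (y - z)) else 0
  have hψ0 : ∀ z y, 0 ≤ ψ z y := fun z y => by
    simp only [ψ]; split_ifs
    exacts [hφ0 _, le_rfl]
  have hnorm : ∀ z ∈ T, ∀ y, ‖(d z)⁻¹ • (y - z)‖ = (d z)⁻¹ * dist y z := fun z hz y => by
    rw [norm_smul, norm_inv, Real.norm_of_nonneg (hdpos z (hTE hz)).le, dist_eq_norm]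
  have hψs : ∀ z y, ψ z y ≠ 0 → z ∈ T ∧ dist y z < d z / 4 := fun z y hzy => by
    by_cases hz : z ∈ T
    · refine ⟨hz, ?_⟩
      have := hφs _ (by simpa only [ψ, if_pos hz] using hzy)
      rw [hnorm z hz, inv_mul_lt_iff₀ (hdpos z (hTE hz))] at this
      linarith
    · exact absurd (by simp only [ψ, if_neg hz]) hzy
  -- The first factor of the constant bounds the weighted sum of Taylor differences, where
  -- `27 = 3 ^ 3` comes from base points at distance at most `3 * d x`; the second bounds the
  -- reciprocal of the sum of the weights.
  refine ⟨fun y => if y ∈ E then f y else (∑ᶠ z, ψ z y * taylor f g h (p z) y) / ∑ᶠ z, ψ z y,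
    8 * (N * (8 * (8 * B) * (13 * M * 27))) * (36 * (N * (8 * B) + 1) ^ 3), by positivity,
    fun a ha => if_pos ha, fun x hx => ⟨p x, hpE x, hpd x, ?_⟩⟩
  have hδ := hdpos x hx
  obtain ⟨I, hIN, hI⟩ := hfin x hx
  -- The only indices contributing near `x` are those in `I`.
  have hnear : ∀ y ∈ Metric.ball x (d x / 4), ∀ z, ψ z y ≠ 0 → z ∈ I := by
    intro y hy z hzy
    obtain ⟨hz, hzd⟩ := hψs z y hzy
    have hy' : dist y x < d x / 4 := hy
    have h1 := hdlip y x
    have h2 := hdlip x y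
    have h3 := hdlip y z
    have h4 := hdlip z y
    have h5 := dist_triangle_left z x y
    rw [dist_comm x y] at h2
    rw [dist_comm z y] at h4
    refine (hI z).2 ⟨hz, ?_, ?_, ?_⟩ <;> simp only [hd] at * <;> linarith
  have hS1 : ∀ y ∈ Metric.ball x (d x / 4), y ∉ E → 1 ≤ ∑ z ∈ I, ψ z y := by
    intro y hy hyE
    obtain ⟨z, hz, hzd⟩ := hcov y hyE
    have hzy : ψ z y = 1 := by
      simp only [ψ, if_pos hz]
      apply hφ1
      rw [hnorm z hz, inv_mul_le_iff₀ (hdpos z (hTE hz))]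
      simp only [hd]; linarith
    rw [← hzy]
    exact Finset.single_le_sum (f := fun z => ψ z y) (fun i _ => hψ0 i y)
      (hnear y hy z (by rw [hzy]; norm_num))
  have hloc : (fun y => (if y ∈ E then f y else
      (∑ᶠ z, ψ z y * taylor f g h (p z) y) / ∑ᶠ z, ψ z y) - taylor f g h (p x) y) =ᶠ[nhds x]
      fun y => (∑ z ∈ I, ψ z y * (taylor f g h (p z) y - taylor f g h (p x) y)) *
        (∑ z ∈ I, ψ z y)⁻¹ := by
    filter_upwards [Metric.ball_mem_nhds x (by linarith : 0 < d x / 4),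
      hE.isOpen_compl.mem_nhds hx] with y hy hyE
    have hS := hS1 y hy hyE
    have hS0 : ∑ z ∈ I, ψ z y ≠ 0 := by positivity
    rw [if_neg hyE, finsum_eq_sum_of_support_subset (s := I) _ fun z hz => hnear y hy z
      (left_ne_zero_of_mul hz), finsum_eq_sum_of_support_subset (s := I) _ fun z hz => hnear y hy z hz]
    simp only [mul_sub, Finset.sum_sub_distrib, ← Finset.sum_mul]
    field_simp
  refine JetBound.congr ?_ hloc
  have hψb : ∀ z ∈ I, JetBound (ψ z) x (d x) (8 * B) := by
    intro z hz
    obtain ⟨hzT, -, hz2, -⟩ := (hI z).1 hz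
    have : ψ z = fun y => φ ((d z)⁻¹ • (y - z)) := by
      ext y; simp only [ψ, if_pos hzT]
    rw [this]
    exact jetBound_bump hφ hφB (hdpos z (hTE hzT)) hδ.le hz2 z x
  have hQb : ∀ z ∈ I, JetBound (fun y => taylor f g h (p z) y - taylor f g h (p x) y) x (d x)
      (13 * M * 27 * d x ^ 3) := by
    intro z hz
    obtain ⟨-, hz1, -, hz3⟩ := (hI z).1 hz
    refine ⟨((contDiff_taylor f g h _ 3).sub (contDiff_taylor f g h _ 3)).contDiffAt, fun k hk => ?_⟩
    -- `dist x z ≤ d x` and `dist z (p z) = d z ≤ 2 * d x`.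
    have hxz : ‖x - p z‖ ≤ 3 * d x := by
      have h1 := dist_triangle x z (p z)
      have h2 := hpd z
      rw [dist_comm x z] at h1
      rw [← dist_eq_norm]
      simp only [hd] at *; linarith
    have hxx : ‖x - p x‖ ≤ 3 * d x := by
      rw [← dist_eq_norm, ← hpd x]
      change d x ≤ _
      linarith
    calc _ ≤ (13 * M * (3 * d x) ^ (3 - k)) * d x ^ k := by
          gcongr
          exact hj.taylor_sub (hpE z) (hpE x) hxz hxx k hk
      _ = 13 * M * 3 ^ (3 - k) * (d x ^ (3 - k) * d x ^ k) := by rw [mul_pow]; ring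
      _ = 13 * M * 3 ^ (3 - k) * d x ^ 3 := by rw [← pow_add, Nat.sub_add_cancel hk]
      _ ≤ 13 * M * 3 ^ 3 * d x ^ 3 := by
        gcongr
        · norm_num
        · omega
      _ = _ := by norm_num
  have hnum := JetBound.sum hδ.le (by positivity) hIN fun z hz => (hψb z hz).mul hδ.le (hQb z hz)
  have hden := JetBound.inv (C := N * (8 * B) + 1) hδ
    ((JetBound.sum hδ.le (by positivity) hIN hψb).mono (by linarith))
    (hS1 x (Metric.mem_ball_self (by linarith)) hx) (by
      have : 0 ≤ N * (8 * B) := by positivity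
      linarith)
  refine (hnum.mul hδ.le hden).mono (le_of_eq ?_)
  simp only [hd]; ring
end Ext

/-! ### Regularity of the extension -/

section Closed
variable {V : Type*} [NormedAddCommGroup V] [InnerProductSpace ℝ V] [CompleteSpace V]
  [FiniteDimensional ℝ V]

/-- Whitney's extension theorem for `C^{2,1}` jets on a closed set.  The remainder bounds of
`exists_extension_off` give the first two derivatives of `F` on `E` and bound the third derivative
off `E`.  Two points whose segment meets `E` are compared through a point of the intersection,
and otherwise the mean value inequality applies. -/
theorem whitney_closed {E : Set V} {M : ℝ} {f : V → ℝ} {g : V → V} {h : V → V →L[ℝ] V}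
    (hE : IsClosed E) (hne : E.Nonempty) (hj : IsWhitneyJet E M f g h) :
    ∃ F : V → ℝ, ContDiff ℝ 2 F ∧
      (∃ L : NNReal, LipschitzWith L fun x => fderiv ℝ (gradient F) x) ∧
      ∀ x ∈ E, F x = f x ∧ gradient F x = g x ∧ fderiv ℝ (gradient F) x = h x := by
  obtain ⟨F, C, hC, hFE, hF⟩ := exists_extension_off hE hne hj
  have hM := hj.nonneg
  have hF3 : ∀ x ∉ E, ContDiffAt ℝ 3 F x := by
    intro x hx
    obtain ⟨a, -, -, ha⟩ := hF x hx
    simpa using ha.1.add (contDiff_taylor f g h a 3).contDiffAt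
  -- Off `E`, the Taylor remainder at any `b ∈ E` has the expected size.
  have hrem : ∀ x ∉ E, ∀ b ∈ E, ∀ k ≤ 3,
      ‖iteratedFDeriv ℝ k (fun y => F y - taylor f g h b y) x‖ ≤ (C + 13 * M) * ‖x - b‖ ^ (3 - k) := by
    intro x hx b hb k hk
    obtain ⟨a, haE, had, ha⟩ := hF x hx
    have hpos : 0 < Metric.infDist x E := (hE.notMem_iff_infDist_pos hne).1 hx
    have hle : Metric.infDist x E ≤ ‖x - b‖ := by
      rw [← dist_eq_norm]; exact Metric.infDist_le_dist_of_mem hb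
    have e : (fun y => F y - taylor f g h b y) = (fun y => F y - taylor f g h a y) +
        fun y => taylor f g h a y - taylor f g h b y := by
      ext y; simp
    have hk' : (k : WithTop ℕ∞) ≤ 3 := by exact_mod_cast hk
    rw [e, iteratedFDeriv_add_apply (ha.1.of_le hk')
      (((contDiff_taylor f g h a k).sub (contDiff_taylor f g h b k)).contDiffAt)]
    have h1 : ‖iteratedFDeriv ℝ k (fun y => F y - taylor f g h a y) x‖ ≤
        C * Metric.infDist x E ^ (3 - k) := by
      refine le_of_mul_le_mul_right ((ha.2 k hk).trans (le_of_eq ?_)) (pow_pos hpos k)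
      rw [mul_assoc, ← pow_add, Nat.sub_add_cancel hk]
    have h2 := hj.taylor_sub haE hb (x := x) (s := ‖x - b‖)
      (by rwa [← dist_eq_norm, ← had]) le_rfl k hk
    calc _ ≤ C * Metric.infDist x E ^ (3 - k) + 13 * M * ‖x - b‖ ^ (3 - k) :=
          (norm_add_le _ _).trans (add_le_add h1 h2)
      _ ≤ C * ‖x - b‖ ^ (3 - k) + 13 * M * ‖x - b‖ ^ (3 - k) := by gcongr
      _ = _ := by ring
  have hMC : M ≤ C + 13 * M := by linarith
  have hgradAt : ∀ b ∈ E, HasGradientAt F (g b) b := by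
    intro b hb
    have hO : (fun y => F y - taylor f g h b y) =O[nhds b] fun y => ‖y - b‖ ^ 3 := by
      refine Asymptotics.IsBigO.of_bound (C + 13 * M) (Filter.Eventually.of_forall fun y => ?_)
      rw [Real.norm_of_nonneg (by positivity : 0 ≤ ‖y - b‖ ^ 3)]
      by_cases hy : y ∈ E
      · rw [hFE y hy, norm_sub_rev y b, Real.norm_eq_abs]
        have := hj.val b hb y hy
        calc _ = |f y - f b - ⟪g b, y - b⟫ - (1 / 2) * ⟪y - b, h b (y - b)⟫| := by
              unfold taylor; congr 1; ring
          _ ≤ M * ‖b - y‖ ^ 3 := this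
          _ ≤ _ := by gcongr
      · simpa using hrem y hy b hb 0 (by norm_num)
    have h1 := hO.hasFDerivAt (𝕜 := ℝ) (by norm_num)
    have h2 := h1.add (hasGradientAt_taylor (f := f) (g := g) b b (hj.symm b hb)).hasFDerivAt
    rw [hasGradientAt_iff_hasFDerivAt]
    have e : (fun y => F y - taylor f g h b y) + taylor f g h b = F := by ext y; simp
    rw [e] at h2
    exact h2.congr_fderiv (by simp)
  have hgrad : ∀ b ∈ E, gradient F b = g b := fun b hb => (hgradAt b hb).gradient
  have hhess : ∀ b ∈ E, HasFDerivAt (gradient F) (h b) b := by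
    intro b hb
    have hO : (fun y => gradient F y - (g b + h b (y - b))) =O[nhds b] fun y => ‖y - b‖ ^ 2 := by
      refine Asymptotics.IsBigO.of_bound (C + 13 * M) (Filter.Eventually.of_forall fun y => ?_)
      rw [Real.norm_of_nonneg (by positivity : 0 ≤ ‖y - b‖ ^ 2)]
      by_cases hy : y ∈ E
      · rw [hgrad y hy, norm_sub_rev y b, ← sub_sub]
        exact (hj.grad b hb y hy).trans (by gcongr)
      · have := hrem y hy b hb 1 (by norm_num)
        rwa [norm_iteratedFDeriv_one_eq, gradient_sub ((hF3 y hy).differentiableAt (by norm_num))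
          ((contDiff_taylor f g h b 1).differentiable (by norm_num) y),
          gradient_taylor b (hj.symm b hb)] at this
    have h1 := hO.hasFDerivAt (𝕜 := ℝ) (by norm_num)
    have h0 : HasFDerivAt (fun x : V => x - b) (ContinuousLinearMap.id ℝ V) b :=
      (hasFDerivAt_id b).sub_const b
    have h2 := h1.add (((h b).hasFDerivAt.comp b h0).const_add (g b))
    convert h2 using 1
    · ext y; simp
    · simp
  -- The Hessian at an arbitrary point compared with the Hessian at a point of `E`.
  have hHb : ∀ x, ∀ b ∈ E, ‖fderiv ℝ (gradient F) x - fderiv ℝ (gradient F) b‖ ≤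
      (C + 13 * M) * ‖x - b‖ := by
    intro x b hb
    rw [(hhess b hb).fderiv]
    by_cases hx : x ∈ E
    · rw [(hhess x hx).fderiv]
      exact (hj.hess x hx b hb).trans (by gcongr)
    · have := hrem x hx b hb 2 (by norm_num)
      rw [norm_iteratedFDeriv_two_eq,
        (fderiv_gradient_sub_taylor (hF3 x hx) b (hj.symm b hb)).eq_of_nhds] at this
      simpa using this
  have hD3 : ∀ x ∉ E, DifferentiableAt ℝ (fderiv ℝ (gradient F)) x ∧
      ‖fderiv ℝ (fderiv ℝ (gradient F)) x‖ ≤ C + 13 * M := by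
    intro x hx
    refine ⟨((contDiffAt_gradient (hF3 x hx)).fderiv_right (m := 1) (by norm_num)).differentiableAt
      (by norm_num), ?_⟩
    obtain ⟨b, hb⟩ := hne
    have := hrem x hx b hb 3 le_rfl
    rw [norm_iteratedFDeriv_three_eq,
      (fderiv_gradient_sub_taylor (hF3 x hx) b (hj.symm b hb)).fderiv_eq, fderiv_sub_const] at this
    simpa using this
  have hLip : ∀ x y, ‖fderiv ℝ (gradient F) x - fderiv ℝ (gradient F) y‖ ≤
      (C + 13 * M) * ‖x - y‖ := by
    intro x y
    by_cases hseg : ∃ a ∈ segment ℝ x y, a ∈ E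
    · obtain ⟨a, has, haE⟩ := hseg
      have h1 := hHb x a haE
      have h2 := hHb y a haE
      have h3 := dist_add_dist_of_mem_segment has
      rw [dist_eq_norm, dist_eq_norm, dist_eq_norm, norm_sub_rev a y] at h3
      calc _ ≤ ‖fderiv ℝ (gradient F) x - fderiv ℝ (gradient F) a‖ +
            ‖fderiv ℝ (gradient F) y - fderiv ℝ (gradient F) a‖ := by
            rw [norm_sub_rev (fderiv ℝ (gradient F) y)]; exact norm_sub_le_norm_sub_add_norm_sub _ _ _
        _ ≤ (C + 13 * M) * (‖x - a‖ + ‖y - a‖) := by linarith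
        _ = _ := by rw [h3]
    · push Not at hseg
      exact (convex_segment x y).norm_image_sub_le_of_norm_fderiv_le
        (fun z hz => (hD3 z (hseg z hz)).1) (fun z hz => (hD3 z (hseg z hz)).2)
        (right_mem_segment ℝ x y) (left_mem_segment ℝ x y)
  have hlip : LipschitzWith (C + 13 * M).toNNReal fun x => fderiv ℝ (gradient F) x := by
    refine LipschitzWith.of_dist_le_mul fun x y => ?_
    rw [dist_eq_norm, dist_eq_norm, Real.coe_toNNReal _ (by positivity)]
    exact hLip x y
  refine ⟨F, ?_, ⟨_, hlip⟩, fun x hx => ⟨hFE x hx, hgrad x hx, (hhess x hx).fderiv⟩⟩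
  have hg1 : ContDiff ℝ 1 (gradient F) := by
    refine contDiff_one_iff_fderiv.2 ⟨fun x => ?_, hlip.continuous⟩
    by_cases hx : x ∈ E
    · exact (hhess x hx).differentiableAt
    · exact (contDiffAt_gradient (hF3 x hx)).differentiableAt (by norm_num)
  have e : fderiv ℝ F = (dualEquiv V).symm ∘ gradient F := by
    rw [gradient_eq_comp]; ext1 x; simp
  rw [show (2 : WithTop ℕ∞) = 1 + 1 by norm_num, contDiff_succ_iff_fderiv]
  refine ⟨fun x => ?_, by simp, ?_⟩
  · by_cases hx : x ∈ E
    · exact (hgradAt x hx).differentiableAt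
    · exact (hF3 x hx).differentiableAt (by norm_num)
  · rw [e]
    exact (dualEquiv V).symm.contDiff.comp hg1
end Closed

/-! ### Jets on bounded sets -/

section Reduction
variable {V : Type*} [NormedAddCommGroup V] [InnerProductSpace ℝ V] [CompleteSpace V]
  {E : Set V} {M : ℝ} {f : V → ℝ} {g : V → V} {h : V → V →L[ℝ] V}

omit [CompleteSpace V] in
lemma IsWhitneyJet.exists_bound (hj : IsWhitneyJet E M f g h) (hE : Bornology.IsBounded E) :
    ∃ K : ℝ, 0 ≤ K ∧ ∀ x ∈ E, ‖x‖ ≤ K ∧ |f x| ≤ K ∧ ‖g x‖ ≤ K ∧ ‖h x‖ ≤ K := by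
  rcases E.eq_empty_or_nonempty with rfl | ⟨a, ha⟩
  · exact ⟨0, le_rfl, by simp⟩
  have hM := hj.nonneg
  obtain ⟨D, hD0, hD⟩ := hE.exists_pos_norm_le
  have hd : ∀ x ∈ E, ‖x - a‖ ≤ 2 * D := fun x hx => by
    have := norm_sub_le x a
    have := hD x hx
    have := hD a ha
    linarith
  have hh : ∀ x ∈ E, ‖h x‖ ≤ ‖h a‖ + M * (2 * D) := fun x hx => by
    have h1 := hj.hess x hx a ha
    have h2 : M * ‖x - a‖ ≤ M * (2 * D) := by gcongr; exact hd x hx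
    have h3 := norm_le_insert' (h x) (h a)
    linarith
  have hg : ∀ x ∈ E, ‖g x‖ ≤ ‖g a‖ + ‖h a‖ * (2 * D) + M * (2 * D) ^ 2 := fun x hx => by
    have h1 := hj.grad a ha x hx
    rw [norm_sub_rev a x] at h1
    have h2 : M * ‖x - a‖ ^ 2 ≤ M * (2 * D) ^ 2 := by gcongr; exact hd x hx
    have h3 : ‖h a (x - a)‖ ≤ ‖h a‖ * (2 * D) := by
      refine ((h a).le_opNorm _).trans ?_
      gcongr; exact hd x hx
    have e : g x = g a + h a (x - a) + (g x - g a - h a (x - a)) := by abel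
    rw [e]
    refine (norm_add₃_le).trans ?_
    linarith
  have hf : ∀ x ∈ E, |f x| ≤ |f a| + ‖g a‖ * (2 * D) + (2 * D) * (‖h a‖ * (2 * D))
      + M * (2 * D) ^ 3 := fun x hx => by
    have h1 := hj.val a ha x hx
    rw [norm_sub_rev a x] at h1
    have h2 : M * ‖x - a‖ ^ 3 ≤ M * (2 * D) ^ 3 := by gcongr; exact hd x hx
    have h3 : ‖h a (x - a)‖ ≤ ‖h a‖ * (2 * D) := by
      refine ((h a).le_opNorm _).trans ?_
      gcongr; exact hd x hx
    have h4 : |⟪g a, x - a⟫| ≤ ‖g a‖ * (2 * D) :=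
      (abs_real_inner_le_norm _ _).trans (by gcongr; exact hd x hx)
    have h5 : |⟪x - a, h a (x - a)⟫| ≤ (2 * D) * (‖h a‖ * (2 * D)) :=
      (abs_real_inner_le_norm _ _).trans (by gcongr; exact hd x hx)
    have h6 := neg_abs_le (f a)
    have h7 := le_abs_self (f a)
    have h1' := abs_le.1 h1
    have h4' := abs_le.1 h4
    have h5' := abs_le.1 h5
    rw [abs_le]
    constructor <;> linarith
  set K1 := ‖h a‖ + M * (2 * D)
  set K2 := ‖g a‖ + ‖h a‖ * (2 * D) + M * (2 * D) ^ 2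
  set K3 := |f a| + ‖g a‖ * (2 * D) + (2 * D) * (‖h a‖ * (2 * D)) + M * (2 * D) ^ 3
  have p1 : 0 ≤ K1 := by positivity
  have p2 : 0 ≤ K2 := by positivity
  have p3 : 0 ≤ K3 := by positivity
  refine ⟨D + K1 + K2 + K3, by positivity, fun x hx => ⟨?_, ?_, ?_, ?_⟩⟩
  · have := hD x hx; linarith
  · have := hf x hx; linarith
  · have := hg x hx; linarith
  · have := hh x hx; linarith

omit [CompleteSpace V] in
/-- A Whitney jet on a bounded set extends to the closure with the same constant.  The graph of the
jet is bounded, so its closure is compact and lies over the whole of `closure E`; the jet conditions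
are closed, hence hold on the closure of the graph, and they force it to be single-valued. -/
lemma IsWhitneyJet.exists_closure [FiniteDimensional ℝ V] (hj : IsWhitneyJet E M f g h)
    (hE : Bornology.IsBounded E) :
    ∃ (f' : V → ℝ) (g' : V → V) (h' : V → V →L[ℝ] V), IsWhitneyJet (closure E) M f' g' h' ∧
      ∀ x ∈ E, f' x = f x ∧ g' x = g x ∧ h' x = h x := by
  have : ProperSpace V := FiniteDimensional.proper ℝ V
  have : ProperSpace (V →L[ℝ] V) := FiniteDimensional.proper ℝ _
  obtain ⟨K, hK0, hK⟩ := hj.exists_bound hE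
  let A : Set (V × ℝ × V × (V →L[ℝ] V)) := (fun x => (x, f x, g x, h x)) '' E
  have hAb : Bornology.IsBounded A := by
    refine isBounded_iff_forall_norm_le.2 ⟨K, ?_⟩
    rintro _ ⟨x, hx, rfl⟩
    obtain ⟨k1, k2, k3, k4⟩ := hK x hx
    simp only [norm_prod_le_iff]
    exact ⟨k1, k2, k3, k4⟩
  have hcl : closure E ⊆ Prod.fst '' closure A := by
    refine closure_minimal ?_ (hAb.isCompact_closure.image continuous_fst).isClosed
    intro x hx
    exact ⟨_, subset_closure ⟨x, hx, rfl⟩, rfl⟩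
  have hsym : ∀ p ∈ closure A, ∀ u v : V, ⟪p.2.2.2 u, v⟫ = ⟪u, p.2.2.2 v⟫ := by
    intro p hp u v
    have hc : IsClosed {p : V × ℝ × V × (V →L[ℝ] V) | ⟪p.2.2.2 u, v⟫ = ⟪u, p.2.2.2 v⟫} :=
      isClosed_eq (by fun_prop) (by fun_prop)
    refine closure_minimal ?_ hc hp
    rintro _ ⟨x, hx, rfl⟩
    exact hj.symm x hx u v
  have hrel : ∀ p ∈ closure A, ∀ q ∈ closure A,
      ‖p.2.2.2 - q.2.2.2‖ ≤ M * ‖p.1 - q.1‖ ∧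
      ‖q.2.2.1 - p.2.2.1 - p.2.2.2 (q.1 - p.1)‖ ≤ M * ‖p.1 - q.1‖ ^ 2 ∧
      |q.2.1 - p.2.1 - ⟪p.2.2.1, q.1 - p.1⟫ - (1 / 2) * ⟪q.1 - p.1, p.2.2.2 (q.1 - p.1)⟫| ≤
        M * ‖p.1 - q.1‖ ^ 3 := by
    have key : ∀ φ ψ : (V × ℝ × V × (V →L[ℝ] V)) × (V × ℝ × V × (V →L[ℝ] V)) → ℝ,
        Continuous φ → Continuous ψ →
        (∀ x ∈ E, ∀ y ∈ E, φ ((x, f x, g x, h x), (y, f y, g y, h y)) ≤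
          ψ ((x, f x, g x, h x), (y, f y, g y, h y))) →
        ∀ p ∈ closure A, ∀ q ∈ closure A, φ (p, q) ≤ ψ (p, q) := by
      intro φ ψ hφ hψ hle p hp q hq
      have hpq : (p, q) ∈ closure (A ×ˢ A) := by
        rw [closure_prod_eq]; exact ⟨hp, hq⟩
      refine closure_minimal (t := {w | φ w ≤ ψ w}) ?_ (isClosed_le hφ hψ) hpq
      rintro ⟨_, _⟩ ⟨⟨x, hx, rfl⟩, ⟨y, hy, rfl⟩⟩
      exact hle x hx y hy
    have d1 : Continuous fun w : (V × ℝ × V × (V →L[ℝ] V)) × (V × ℝ × V × (V →L[ℝ] V)) =>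
        w.2.1 - w.1.1 := by fun_prop
    have d2 : Continuous fun w : (V × ℝ × V × (V →L[ℝ] V)) × (V × ℝ × V × (V →L[ℝ] V)) =>
        ‖w.1.1 - w.2.1‖ := by fun_prop
    have d3 : Continuous fun w : (V × ℝ × V × (V →L[ℝ] V)) × (V × ℝ × V × (V →L[ℝ] V)) =>
        w.1.2.2.2 := by fun_prop
    have d4 : Continuous fun w : (V × ℝ × V × (V →L[ℝ] V)) × (V × ℝ × V × (V →L[ℝ] V)) =>
        w.1.2.2.2 (w.2.1 - w.1.1) := d3.clm_apply d1
    have d5 : Continuous fun w : (V × ℝ × V × (V →L[ℝ] V)) × (V × ℝ × V × (V →L[ℝ] V)) =>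
        w.1.2.2.1 := by fun_prop
    have d6 : Continuous fun w : (V × ℝ × V × (V →L[ℝ] V)) × (V × ℝ × V × (V →L[ℝ] V)) =>
        w.2.2.1 - w.1.2.1 := by fun_prop
    have r1 := key (fun w => ‖w.1.2.2.2 - w.2.2.2.2‖) (fun w => M * ‖w.1.1 - w.2.1‖)
      (by fun_prop) (continuous_const.mul d2) (fun x hx y hy => hj.hess x hx y hy)
    have r2 := key (fun w => ‖w.2.2.2.1 - w.1.2.2.1 - w.1.2.2.2 (w.2.1 - w.1.1)‖)
      (fun w => M * ‖w.1.1 - w.2.1‖ ^ 2)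
      ((Continuous.sub (by fun_prop) d4).norm) (continuous_const.mul (d2.pow 2))
      (fun x hx y hy => hj.grad x hx y hy)
    have r3 := key (fun w => |w.2.2.1 - w.1.2.1 - ⟪w.1.2.2.1, w.2.1 - w.1.1⟫ -
        (1 / 2) * ⟪w.2.1 - w.1.1, w.1.2.2.2 (w.2.1 - w.1.1)⟫|)
      (fun w => M * ‖w.1.1 - w.2.1‖ ^ 3)
      (((d6.sub (d5.inner d1)).sub (continuous_const.mul (d1.inner d4))).abs)
      (continuous_const.mul (d2.pow 3)) (fun x hx y hy => hj.val x hx y hy)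
    exact fun p hp q hq => ⟨r1 p hp q hq, r2 p hp q hq, r3 p hp q hq⟩
  have hcl' : ∀ x ∈ closure E, ∃ p, p ∈ closure A ∧ p.1 = x := fun x hx => hcl hx
  choose! s hs hs1 using hcl'
  refine ⟨fun x => (s x).2.1, fun x => (s x).2.2.1, fun x => (s x).2.2.2,
    ⟨hj.nonneg, fun x hx => hsym _ (hs x hx), fun x hx y hy => ?_, fun x hx y hy => ?_,
      fun x hx y hy => ?_⟩, fun x hx => ?_⟩
  · simpa only [hs1 x hx, hs1 y hy] using (hrel _ (hs x hx) _ (hs y hy)).1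
  · simpa only [hs1 x hx, hs1 y hy] using (hrel _ (hs x hx) _ (hs y hy)).2.1
  · simpa only [hs1 x hx, hs1 y hy] using (hrel _ (hs x hx) _ (hs y hy)).2.2
  · have hxc := subset_closure hx
    have hxA : (x, f x, g x, h x) ∈ closure A := subset_closure ⟨x, hx, rfl⟩
    obtain ⟨r1, r2, r3⟩ := hrel _ hxA _ (hs x hxc)
    simp only [hs1 x hxc, sub_self, norm_zero, mul_zero, map_zero, sub_zero, inner_zero_right,
      ne_eq, OfNat.ofNat_ne_zero, not_false_eq_true, zero_pow, norm_le_zero_iff, abs_nonpos_iff,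
      sub_eq_zero] at r1 r2 r3
    exact ⟨r3, r2, r1.symm⟩

omit [CompleteSpace V] in
open Classical in
/-- A bounded jet supported in a ball of radius `K` may be continued by the zero jet outside the ball
of radius `K + 1`.  The two sets are at distance at least `1`, so the new conditions follow from the
bounds on the jet alone; `3 * K` is for its three components. -/
lemma IsWhitneyJet.zero_outside (hj : IsWhitneyJet E M f g h) {K : ℝ} (hK0 : 0 ≤ K)
    (hK : ∀ x ∈ E, ‖x‖ ≤ K ∧ |f x| ≤ K ∧ ‖g x‖ ≤ K ∧ ‖h x‖ ≤ K) :
    IsWhitneyJet (E ∪ {x | K + 1 ≤ ‖x‖}) (M + 3 * K) (fun x => if x ∈ E then f x else 0)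
      (fun x => if x ∈ E then g x else 0) (fun x => if x ∈ E then h x else 0) := by
  have hM := hj.nonneg
  have hout : ∀ x ∈ E, ∀ y ∈ E ∪ {x | K + 1 ≤ ‖x‖}, y ∉ E → 1 ≤ ‖x - y‖ := by
    intro x hx y hy hyE
    have h1 : K + 1 ≤ ‖y‖ := hy.resolve_left hyE
    have h2 := (hK x hx).1
    have h3 := norm_sub_norm_le y x
    rw [norm_sub_rev] at h3
    linarith
  refine ⟨by positivity, fun x hx u v => ?_, fun x hx y hy => ?_, fun x hx y hy => ?_,
    fun x hx y hy => ?_⟩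
  · by_cases hxE : x ∈ E
    · simpa only [if_pos hxE] using hj.symm x hxE u v
    · simp [if_neg hxE]
  · by_cases hxE : x ∈ E <;> by_cases hyE : y ∈ E <;>
      simp only [hxE, hyE, if_true, if_false]
    · refine (hj.hess x hxE y hyE).trans ?_
      gcongr; linarith
    · have h1 := hout x hxE y hy hyE
      have h2 := (hK x hxE).2.2.2
      rw [sub_zero]
      nlinarith
    · have h1 := hout y hyE x hx hxE
      have h2 := (hK y hyE).2.2.2
      rw [zero_sub, norm_neg, norm_sub_rev]
      nlinarith
    · simp only [sub_zero, norm_zero]; positivity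
  · by_cases hxE : x ∈ E <;> by_cases hyE : y ∈ E <;>
      simp only [hxE, hyE, if_true, if_false]
    · refine (hj.grad x hxE y hyE).trans ?_
      gcongr; linarith
    · have h1 := hout x hxE y hy hyE
      obtain ⟨-, -, h2, h3⟩ := hK x hxE
      have h4 : ‖h x (y - x)‖ ≤ K * ‖x - y‖ := by
        rw [norm_sub_rev x y]
        exact ((h x).le_opNorm _).trans (by gcongr)
      rw [zero_sub, ← neg_add', norm_neg]
      refine (norm_add_le _ _).trans ?_
      have h5 : 1 ≤ ‖x - y‖ ^ 2 := one_le_pow₀ h1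
      have h6 : ‖x - y‖ ≤ ‖x - y‖ ^ 2 := le_self_pow₀ h1 (by norm_num)
      have h7 : 0 ≤ M * ‖x - y‖ ^ 2 := by positivity
      nlinarith
    · have h1 := hout y hyE x hx hxE
      obtain ⟨-, -, h2, h3⟩ := hK y hyE
      rw [sub_zero, zero_apply, sub_zero, norm_sub_rev x y]
      have h5 : 1 ≤ ‖y - x‖ ^ 2 := one_le_pow₀ h1
      nlinarith
    · simp only [sub_zero, norm_zero, zero_apply]; positivity
  · by_cases hxE : x ∈ E <;> by_cases hyE : y ∈ E <;>
      simp only [hxE, hyE, if_true, if_false]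
    · refine (hj.val x hxE y hyE).trans ?_
      gcongr; linarith
    · have h1 := hout x hxE y hy hyE
      obtain ⟨-, h0, h2, h3⟩ := hK x hxE
      have h4 : ‖h x (y - x)‖ ≤ K * ‖x - y‖ := by
        rw [norm_sub_rev x y]
        exact ((h x).le_opNorm _).trans (by gcongr)
      have c1 : |⟪g x, y - x⟫| ≤ K * ‖x - y‖ :=
        (abs_real_inner_le_norm _ _).trans (by rw [norm_sub_rev x y]; gcongr)
      have c2 : |⟪y - x, h x (y - x)⟫| ≤ ‖x - y‖ * (K * ‖x - y‖) :=
        (abs_real_inner_le_norm _ _).trans (by rw [norm_sub_rev y x]; gcongr)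
      have h5 : K ≤ K * ‖x - y‖ ^ 3 := le_mul_of_one_le_right hK0 (one_le_pow₀ h1)
      have h6 : K * ‖x - y‖ ≤ K * ‖x - y‖ ^ 3 := by
        gcongr; exact le_self_pow₀ h1 (by norm_num)
      have h7 : K * ‖x - y‖ ^ 2 ≤ K * ‖x - y‖ ^ 3 := 
        mul_le_mul_of_nonneg_left (pow_le_pow_right₀ h1 (by norm_num)) hK0
      have h8 : 0 ≤ M * ‖x - y‖ ^ 3 := by positivity
      have h9 : ‖x - y‖ * (K * ‖x - y‖) = K * ‖x - y‖ ^ 2 := by ring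
      rw [h9] at c2
      rw [abs_le] at *
      constructor <;> linarith
    · have h1 := hout y hyE x hx hxE
      have h2 := (hK y hyE).2.1
      rw [norm_sub_rev] at h1
      have h5 : K ≤ K * ‖x - y‖ ^ 3 := le_mul_of_one_le_right hK0 (one_le_pow₀ h1)
      have h8 : 0 ≤ M * ‖x - y‖ ^ 3 := by positivity
      simp only [sub_zero, inner_zero_left, zero_apply, inner_zero_right, mul_zero]
      linarith
    · simp only [sub_zero, inner_zero_left, zero_apply, inner_zero_right, mul_zero, abs_zero]
      positivity

omit [CompleteSpace V] in
lemma IsWhitneyJet.sub_quadratic (hj : IsWhitneyJet E M f g h) :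
    IsWhitneyJet E M (fun x => f x - (1 / 2) * ⟪x, x⟫) (fun x => g x - x)
      (fun x => h x - ContinuousLinearMap.id ℝ V) := by
  refine ⟨hj.nonneg, fun x hx u v => ?_, fun x hx y hy => ?_, fun x hx y hy => ?_,
    fun x hx y hy => ?_⟩
  · simp only [sub_apply, ContinuousLinearMap.id_apply, inner_sub_left, inner_sub_right,
      hj.symm x hx u v]
  · rw [sub_sub_sub_cancel_right]; exact hj.hess x hx y hy
  · have e : g y - y - (g x - x) - (h x - ContinuousLinearMap.id ℝ V) (y - x) =
        g y - g x - h x (y - x) := by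
      simp only [sub_apply, ContinuousLinearMap.id_apply]; abel
    rw [e]; exact hj.grad x hx y hy
  · refine le_trans (le_of_eq ?_) (hj.val x hx y hy)
    congr 1
    simp only [sub_apply, ContinuousLinearMap.id_apply, inner_sub_left, inner_sub_right]
    have := real_inner_comm x y
    linarith
end Reduction

/-- Subtracting the jet of `½‖x‖²` and extending by zero far away, then adding `½‖x‖²` back, gives
an extension whose Hessian is the identity outside a ball. -/
theorem whitney_of_nonempty (n : ℕ) (E : Set (EuclideanSpace ℝ (Fin n))) (hne : E.Nonempty)
    (hE : Bornology.IsBounded E)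
    (f : EuclideanSpace ℝ (Fin n) → ℝ)
    (g : EuclideanSpace ℝ (Fin n) → EuclideanSpace ℝ (Fin n))
    (h : EuclideanSpace ℝ (Fin n) → (EuclideanSpace ℝ (Fin n) →L[ℝ] EuclideanSpace ℝ (Fin n)))
    (M : ℝ) (hj : IsWhitneyJet E M f g h) :
    ∃ F : EuclideanSpace ℝ (Fin n) → ℝ, MemLC F ∧
      ∀ x ∈ E, F x = f x ∧ gradient F x = g x ∧ fderiv ℝ (gradient F) x = h x := by
  classical
  obtain ⟨f₁, g₁, h₁, hj₁, heq⟩ := hj.sub_quadratic.exists_closure hE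
  obtain ⟨K, hK0, hK⟩ := hj₁.exists_bound hE.closure
  obtain ⟨F, hF2, ⟨L, hL⟩, hF⟩ := whitney_closed
    (isClosed_closure.union (isClosed_le continuous_const continuous_norm))
    (hne.closure.inl) (hj₁.zero_outside hK0 hK)
  let q : EuclideanSpace ℝ (Fin n) → ℝ :=
    taylor (fun _ => 0) (fun _ => 0) (fun _ => ContinuousLinearMap.id ℝ _) 0
  have hq2 : ContDiff ℝ 2 q := contDiff_taylor _ _ _ _ _
  have hqv : ∀ x, q x = (1 / 2) * ⟪x, x⟫ := fun x => by simp [q, taylor]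
  have hqg : gradient q = fun x => x := by
    rw [gradient_taylor _ fun u v => rfl]; ext1 x; simp
  have hG : gradient (fun x => F x + q x) = fun x => gradient F x + x := by
    ext1 x
    have h1 := (hF2.differentiable (by norm_num) x).hasGradientAt.hasFDerivAt
    have h2 := (hq2.differentiable (by norm_num) x).hasGradientAt.hasFDerivAt
    have h3 := h1.add h2
    rw [hqg, ← map_add] at h3
    exact HasGradientAt.gradient (hasGradientAt_iff_hasFDerivAt.2 h3)
  have hFg : Differentiable ℝ (gradient F) := by
    rw [gradient_eq_comp]
    exact ((dualEquiv _).contDiff.comp (hF2.fderiv_right (m := 1) (by norm_num))).differentiable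
      (by norm_num)
  have hH : fderiv ℝ (gradient fun x => F x + q x) =
      fun x => fderiv ℝ (gradient F) x + ContinuousLinearMap.id ℝ _ := by
    ext1 x
    rw [hG]
    exact ((hFg x).hasFDerivAt.add (hasFDerivAt_id x)).fderiv
  refine ⟨fun x => F x + q x, ⟨hF2.add hq2, ⟨L, ?_⟩, 1, K + 1, fun x hx => ?_⟩, fun x hx => ?_⟩
  · rw [hH]
    exact LipschitzWith.of_dist_le_mul fun x y => by
      rw [dist_add_right]; exact hL.dist_le_mul x y
  · have hxE : x ∉ closure E := fun h' => by
      have := (hK x h').1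
      linarith
    have e : fderiv ℝ (gradient fun x => F x + q x) x = ContinuousLinearMap.id ℝ _ := by
      rw [hH]
      simp only [(hF x (Or.inr hx)).2.2, if_neg hxE, zero_add]
    rw [e]
    refine ⟨fun v hv => by simpa using real_inner_self_pos.2 hv, ContinuousLinearMap.id ℝ _,
      by simp, by simp, ContinuousLinearMap.norm_id_le⟩
  · have hxE := subset_closure hx
    obtain ⟨a1, a2, a3⟩ := hF x (Or.inl hxE)
    obtain ⟨b1, b2, b3⟩ := heq x hx
    refine ⟨?_, ?_, ?_⟩
    · simp only [a1, if_pos hxE, b1, hqv]; ring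
    · rw [hG]; simp only [a2, if_pos hxE, b2]; abel
    · rw [hH]; simp only [a3, if_pos hxE, b3]; abel

/-- corollary of Whitney's extension theorem, Theorem 3.2 of the paper. -/
theorem whitney_stmt3 (n : ℕ) (E : Set (EuclideanSpace ℝ (Fin n)))
    (hE : Bornology.IsBounded E)
    (f : EuclideanSpace ℝ (Fin n) → ℝ)
    (g : EuclideanSpace ℝ (Fin n) → EuclideanSpace ℝ (Fin n))
    (h : EuclideanSpace ℝ (Fin n) → (EuclideanSpace ℝ (Fin n) →L[ℝ] EuclideanSpace ℝ (Fin n)))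
    (hsym : ∀ x ∈ E, ∀ u v : EuclideanSpace ℝ (Fin n), ⟪h x u, v⟫ = ⟪u, h x v⟫)
    (M : ℝ)
    (h1 : ∀ x ∈ E, ∀ y ∈ E, ‖h x - h y‖ ≤ M * ‖x - y‖)
    (h2 : ∀ x ∈ E, ∀ y ∈ E, ‖g y - g x - h x (y - x)‖ ≤ M * ‖x - y‖ ^ 2)
    (h3 : ∀ x ∈ E, ∀ y ∈ E,
      |f y - f x - ⟪g x, y - x⟫ - (1 / 2) * ⟪y - x, h x (y - x)⟫| ≤ M * ‖x - y‖ ^ 3) :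
    ∃ F : EuclideanSpace ℝ (Fin n) → ℝ, MemLC F ∧
      ∀ x ∈ E, F x = f x ∧ gradient F x = g x ∧ fderiv ℝ (gradient F) x = h x := by
  rcases E.eq_empty_or_nonempty with rfl | hne
  · -- The extension of the zero jet at the origin serves for the empty set.
    obtain ⟨F, hF, -⟩ := whitney_of_nonempty n {0} (Set.singleton_nonempty 0)
      Bornology.isBounded_singleton (fun _ => 0) (fun _ => 0) (fun _ => 0) 0
      ⟨le_rfl, by simp, by simp, by simp, by simp⟩
    exact ⟨F, hF, by simp⟩
  · refine whitney_of_nonempty n E hne hE f g h (max M 0) ⟨le_max_right _ _, hsym,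
      fun x hx y hy => (h1 x hx y hy).trans ?_, fun x hx y hy => (h2 x hx y hy).trans ?_,
      fun x hx y hy => (h3 x hx y hy).trans ?_⟩ <;>
    · gcongr
      exact le_max_left _ _
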